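/- arXiv:2207.07009 — 2 statements merged into one kernel-verified Lean document; each statement's English description precedes it below -/
import Mathlib

section
/- Under the adapted pure-frontal setup, assume H²−K ≥ 0 everywhere and for j = 1,2 let κ_j and V_j be as defined. Then at every point (u,v), the derivative of ν in the direction V_j equals −κ_j times the derivative of f in the direction V_j; explicitly, −v(M̃−κ_jF̃)·ν_u + (L̃−κ_jẼ)·ν_v = −κ_j·(−v(M̃−κ_jF̃)·f_u + (L̃−κ_jẼ)·f_v), i.e. dν(V_j) = −κ_j·df(V_j). -/
open Filter

noncomputable section

/-- Vectors in ℝ³, modeled as `Fin 3 → ℝ`. -/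
abbrev R3 : Type := Fin 3 → ℝ

/-- The Euclidean inner product on ℝ³. -/
def dot3 (a b : R3) : ℝ := a 0 * b 0 + a 1 * b 1 + a 2 * b 2

/-- The Euclidean norm on ℝ³. -/
def norm3 (a : R3) : ℝ := Real.sqrt (dot3 a a)

/-- Partial derivative in the `u`-direction. -/
def pu {E : Type*} [NormedAddCommGroup E] [NormedSpace ℝ E] (F : ℝ × ℝ → E) (p : ℝ × ℝ) : E :=
  fderiv ℝ F p (1, 0)

/-- Partial derivative in the `v`-direction. -/
def pv {E : Type*} [NormedAddCommGroup E] [NormedSpace ℝ E] (F : ℝ × ℝ → E) (p : ℝ × ℝ) : E :=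
  fderiv ℝ F p (0, 1)

/-- The adapted pure-frontal setup: `f` is a frontal with unit normal `ν`,
`f_v = v·h`, `ν_v = v·ν₁`, the frame `{f_u, h, ν}` is linearly independent everywhere
and orthonormal along the `u`-axis. -/
structure AdaptedPureFrontal (f ν h ν₁ : ℝ × ℝ → R3) : Prop where
  smooth_f : ContDiff ℝ (⊤ : ℕ∞) f
  smooth_ν : ContDiff ℝ (⊤ : ℕ∞) ν
  smooth_h : ContDiff ℝ (⊤ : ℕ∞) h
  smooth_ν₁ : ContDiff ℝ (⊤ : ℕ∞) ν₁
  unit_ν : ∀ p, dot3 (ν p) (ν p) = 1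
  orth_fu_ν : ∀ p, dot3 (pu f p) (ν p) = 0
  orth_fv_ν : ∀ p, dot3 (pv f p) (ν p) = 0
  fv_eq : ∀ p : ℝ × ℝ, pv f p = p.2 • h p
  νv_eq : ∀ p : ℝ × ℝ, pv ν p = p.2 • ν₁ p
  indep : ∀ p, LinearIndependent ℝ ![pu f p, h p, ν p]
  adapted_fu : ∀ u : ℝ, dot3 (pu f (u, 0)) (pu f (u, 0)) = 1
  adapted_h : ∀ u : ℝ, dot3 (h (u, 0)) (h (u, 0)) = 1
  adapted_fu_h : ∀ u : ℝ, dot3 (pu f (u, 0)) (h (u, 0)) = 0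
  adapted_h_ν : ∀ u : ℝ, dot3 (h (u, 0)) (ν (u, 0)) = 0

/-- Ẽ = ⟨f_u, f_u⟩. -/
def Et (f : ℝ × ℝ → R3) (p : ℝ × ℝ) : ℝ := dot3 (pu f p) (pu f p)

/-- F̃ = ⟨f_u, h⟩. -/
def Ft (f h : ℝ × ℝ → R3) (p : ℝ × ℝ) : ℝ := dot3 (pu f p) (h p)

/-- G̃ = ⟨h, h⟩. -/
def Gt (h : ℝ × ℝ → R3) (p : ℝ × ℝ) : ℝ := dot3 (h p) (h p)

/-- L̃ = −⟨f_u, ν_u⟩. -/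
def Lt (f ν : ℝ × ℝ → R3) (p : ℝ × ℝ) : ℝ := -dot3 (pu f p) (pu ν p)

/-- M̃ = −⟨h, ν_u⟩. -/
def Mt (h ν : ℝ × ℝ → R3) (p : ℝ × ℝ) : ℝ := -dot3 (h p) (pu ν p)

/-- Ñ₁ = −⟨h, ν₁⟩. -/
def Nt1 (h ν₁ : ℝ × ℝ → R3) (p : ℝ × ℝ) : ℝ := -dot3 (h p) (ν₁ p)

/-- The Gaussian curvature K = (L̃Ñ₁ − M̃²)/(ẼG̃ − F̃²). -/
def Kg (f ν h ν₁ : ℝ × ℝ → R3) (p : ℝ × ℝ) : ℝ :=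
  (Lt f ν p * Nt1 h ν₁ p - Mt h ν p ^ 2) / (Et f p * Gt h p - Ft f h p ^ 2)

/-- The mean curvature H = (ẼÑ₁ − 2F̃M̃ + G̃L̃)/(2(ẼG̃ − F̃²)). -/
def Hm (f ν h ν₁ : ℝ × ℝ → R3) (p : ℝ × ℝ) : ℝ :=
  (Et f p * Nt1 h ν₁ p - 2 * Ft f h p * Mt h ν p + Gt h p * Lt f ν p) /
    (2 * (Et f p * Gt h p - Ft f h p ^ 2))

/-- The principal curvature κ = H + ε√(H² − K); `ε = 1` gives κ₁ and `ε = -1` gives κ₂. -/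
def kap (f ν h ν₁ : ℝ × ℝ → R3) (ε : ℝ) (p : ℝ × ℝ) : ℝ :=
  Hm f ν h ν₁ p + ε * Real.sqrt (Hm f ν h ν₁ p ^ 2 - Kg f ν h ν₁ p)

/-- First component of the principal vector field V = −v(M̃ − κF̃)∂_u + (L̃ − κẼ)∂_v. -/
def V1c (f ν h ν₁ : ℝ × ℝ → R3) (ε : ℝ) (p : ℝ × ℝ) : ℝ :=
  -(p.2 * (Mt h ν p - kap f ν h ν₁ ε p * Ft f h p))

/-- Second component of the principal vector field V = −v(M̃ − κF̃)∂_u + (L̃ − κẼ)∂_v. -/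
def V2c (f ν h ν₁ : ℝ × ℝ → R3) (ε : ℝ) (p : ℝ × ℝ) : ℝ :=
  Lt f ν p - kap f ν h ν₁ ε p * Et f p

/-- Directional derivative of `g` along the principal vector field V. -/
def VD (f ν h ν₁ : ℝ × ℝ → R3) (ε : ℝ) {E : Type*} [NormedAddCommGroup E] [NormedSpace ℝ E]
    (g : ℝ × ℝ → E) (p : ℝ × ℝ) : E :=
  V1c f ν h ν₁ ε p • pu g p + V2c f ν h ν₁ ε p • pv g p

/-- The radius of principal curvature ρ = 1/κ. -/
def rho (f ν h ν₁ : ℝ × ℝ → R3) (ε : ℝ) (p : ℝ × ℝ) : ℝ := (kap f ν h ν₁ ε p)⁻¹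

/-- The focal surface C = f + ρ·ν. -/
def Cf (f ν h ν₁ : ℝ × ℝ → R3) (ε : ℝ) (p : ℝ × ℝ) : R3 :=
  f p + rho f ν h ν₁ ε p • ν p

/-- The normal direction x = −(M̃ − κF̃)·f_u + (L̃ − κẼ)·h of the focal surface. -/
def xj (f ν h ν₁ : ℝ × ℝ → R3) (ε : ℝ) (p : ℝ × ℝ) : R3 :=
  (-(Mt h ν p - kap f ν h ν₁ ε p * Ft f h p)) • pu f p +
    (Lt f ν p - kap f ν h ν₁ ε p * Et f p) • h p

/-- The unit normal e = x/‖x‖ of the focal surface. -/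
def ej (f ν h ν₁ : ℝ × ℝ → R3) (ε : ℝ) (p : ℝ × ℝ) : R3 :=
  (norm3 (xj f ν h ν₁ ε p))⁻¹ • xj f ν h ν₁ ε p

/-- The limiting normal curvature κ_ν(u) = L̃(u,0). -/
def kν (f ν : ℝ × ℝ → R3) (u : ℝ) : ℝ := Lt f ν (u, 0)

/-- The cuspidal torsion κ_t(u) = M̃(u,0). -/
def kt (h ν : ℝ × ℝ → R3) (u : ℝ) : ℝ := Mt h ν (u, 0)

/-- The bias r_b(u) = 3Ñ₁(u,0). -/
def rb (h ν₁ : ℝ × ℝ → R3) (u : ℝ) : ℝ := 3 * Nt1 h ν₁ (u, 0)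

/-- The secondary cuspidal curvature r_c(u) = 24((Ñ₁)_v − 2F̃_vM̃ − G̃_vÑ₁)(u,0). -/
def rc (f ν h ν₁ : ℝ × ℝ → R3) (u : ℝ) : ℝ :=
  24 * (pv (Nt1 h ν₁) (u, 0) - 2 * pv (Ft f h) (u, 0) * Mt h ν (u, 0) -
    pv (Gt h) (u, 0) * Nt1 h ν₁ (u, 0))

/-- The singular curvature κ_s(u) = ⟨f_uu, h⟩(u,0). -/
def ks (f h : ℝ × ℝ → R3) (u : ℝ) : ℝ := dot3 (pu (pu f) (u, 0)) (h (u, 0))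

/-- The rank of the differential of `F` at `p`. -/
def rankAt (F : ℝ × ℝ → R3) (p : ℝ × ℝ) : ℕ :=
  Module.finrank ℝ (LinearMap.range (fderiv ℝ F p).toLinearMap)

/-!
Since `df(V)` and `dν(V)` both carry a factor `v`, the claim is
`v • ((L̃ - κẼ) • (ν₁ + κ h) - (M̃ - κF̃) • (ν_u + κ f_u)) = 0`, and only `v ≠ 0` matters. There the
two vectors `A = ν_u + κ f_u` and `B = ν₁ + κ h` are orthogonal to `ν`, and their pairings with
`f_u` and `h` form the matrix `-(II - κ I)`. It is symmetric because the second derivative of `f`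
is, and it is singular because `κ` is a principal curvature; hence its kernel vector
`(-(M̃ - κF̃), L̃ - κẼ)` annihilates the pair `(A, B)` itself, not just its pairings.
-/

theorem eq_zero_of_linearIndependent_of_dotProduct_eq_zero {n K : Type*} [Fintype n] [Field K]
    {b : n → n → K} (hb : LinearIndependent K b) {w : n → K} (hw : ∀ i, b i ⬝ᵥ w = 0) : w = 0 := by
  classical
  have hunit : IsUnit (Matrix.of b) := Matrix.linearIndependent_rows_iff_isUnit.mp hb
  exact Matrix.eq_zero_of_mulVec_eq_zero ((Matrix.isUnit_iff_isUnit_det _).mp hunit).ne_zero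
    (funext hw)

theorem dotProduct_sq_lt_of_linearIndependent {n K : Type*} [Fintype n] [Field K] [LinearOrder K]
    [IsStrictOrderedRing K] {x y : n → K} (hxy : LinearIndependent K ![x, y]) :
    (x ⬝ᵥ y) ^ 2 < (x ⬝ᵥ x) * (y ⬝ᵥ y) := by
  have hself_pos {z : n → K} (hz : z ≠ 0) : 0 < z ⬝ᵥ z :=
    (Finset.sum_nonneg fun i _ ↦ mul_self_nonneg (z i)).lt_of_ne' (mt dotProduct_self_eq_zero.mp hz)
  have hy : 0 < y ⬝ᵥ y := hself_pos (hxy.ne_zero 1)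
  set w := (y ⬝ᵥ y) • x - (x ⬝ᵥ y) • y
  have hw : w ≠ 0 := fun hw ↦ hy.ne'
    (LinearIndependent.pair_iff.mp hxy _ (-(x ⬝ᵥ y)) (by rwa [neg_smul, ← sub_eq_add_neg])).1
  have hww : w ⬝ᵥ w = (y ⬝ᵥ y) * ((x ⬝ᵥ x) * (y ⬝ᵥ y) - (x ⬝ᵥ y) ^ 2) := by
    simp only [w, dotProduct_sub, sub_dotProduct, dotProduct_smul, smul_dotProduct, smul_eq_mul,
      dotProduct_comm y x]
    ring
  exact sub_pos.mp (pos_of_mul_pos_right (hww ▸ hself_pos hw) hy.le)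

theorem dotProduct_smul_eq_dotProduct_smul_of_singular {K : Type*} [Field K] {x y z a b : Fin 3 → K}
    (hxyz : LinearIndependent K ![x, y, z]) (hza : z ⬝ᵥ a = 0) (hzb : z ⬝ᵥ b = 0)
    (hsymm : x ⬝ᵥ b = y ⬝ᵥ a) (hdet : (x ⬝ᵥ a) * (y ⬝ᵥ b) = (y ⬝ᵥ a) ^ 2) :
    (y ⬝ᵥ a) • a = (x ⬝ᵥ a) • b := by
  refine sub_eq_zero.mp (eq_zero_of_linearIndependent_of_dotProduct_eq_zero hxyz fun i ↦ ?_)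
  fin_cases i
  · simp [dotProduct_sub, hsymm, mul_comm]
  · simp [dotProduct_sub, hdet, sq]
  · simp [dotProduct_sub, hza, hzb]

/-- The difference of the two sides is the discriminant in `t` of
`(L - t * E) * (N - t * G) - (M - t * F) ^ 2`. -/
theorem four_mul_det_mul_det_le_sq {K : Type*} [Field K] [LinearOrder K] [IsStrictOrderedRing K]
    {E F G L M N : K} (hI : F ^ 2 < E * G) :
    4 * (E * G - F ^ 2) * (L * N - M ^ 2) ≤ (E * N - 2 * F * M + G * L) ^ 2 := by
  have hE : 0 < E ^ 2 := by
    have : E ≠ 0 := by rintro rfl; nlinarith [sq_nonneg F]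
    positivity
  have hsos : E ^ 2 * ((E * N - 2 * F * M + G * L) ^ 2 - 4 * (E * G - F ^ 2) * (L * N - M ^ 2)) =
      (E * (E * N - G * L) - 2 * F * (E * M - F * L)) ^ 2 +
        4 * (E * G - F ^ 2) * (E * M - F * L) ^ 2 := by
    ring
  refine sub_nonneg.mp (nonneg_of_mul_nonneg_right (hsos ▸ ?_) hE)
  exact add_nonneg (sq_nonneg _)
    (mul_nonneg (mul_nonneg zero_le_four (sub_nonneg.mpr hI.le)) (sq_nonneg _))

section Derivative

open scoped Topology

variable {𝕜 E F G H : Type*} [NontriviallyNormedField 𝕜]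
  [NormedAddCommGroup E] [NormedSpace 𝕜 E] [NormedAddCommGroup F] [NormedSpace 𝕜 F]
  [NormedAddCommGroup G] [NormedSpace 𝕜 G] [NormedAddCommGroup H] [NormedSpace 𝕜 H]

theorem bilinear_fderiv_add_eq_zero_of_eventually_const (B : F →L[𝕜] G →L[𝕜] H) {a : E → F}
    {b : E → G} {p : E} (ha : DifferentiableAt 𝕜 a p) (hb : DifferentiableAt 𝕜 b p) {c : H}
    (hc : ∀ᶠ q in 𝓝 p, B (a q) (b q) = c) (w : E) :
    B (a p) (fderiv 𝕜 b p w) + B (fderiv 𝕜 a p w) (b p) = 0 := by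
  have hderiv : fderiv 𝕜 (fun q ↦ B (a q) (b q)) p = 0 :=
    (EventuallyEq.fderiv_eq hc).trans (fderiv_const_apply c)
  simpa [B.fderiv_of_bilinear ha hb] using DFunLike.congr_fun hderiv w

/-- Symmetry of the second fundamental form of a possibly singular `f` with normal field `ν`. -/
theorem bilinear_fderiv_fderiv_comm_of_orthogonal (B : F →L[𝕜] G →L[𝕜] H) {f : E → F} {ν : E → G}
    {p : E} (hf : ContDiffAt 𝕜 (minSmoothness 𝕜 2) f p) (hν : DifferentiableAt 𝕜 ν p) {v w : E}
    (hv : ∀ᶠ q in 𝓝 p, B (fderiv 𝕜 f q v) (ν q) = 0)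
    (hw : ∀ᶠ q in 𝓝 p, B (fderiv 𝕜 f q w) (ν q) = 0) :
    B (fderiv 𝕜 f p v) (fderiv 𝕜 ν p w) = B (fderiv 𝕜 f p w) (fderiv 𝕜 ν p v) := by
  have hdf : DifferentiableAt 𝕜 (fderiv 𝕜 f) p :=
    ((hf.of_le le_minSmoothness).fderiv_right (m := 1) (by norm_num)).differentiableAt (by simp)
  have hdiff (d : E) : DifferentiableAt 𝕜 (fun q ↦ fderiv 𝕜 f q d) p :=
    hdf.clm_apply (differentiableAt_const d)
  have hsecond (d e : E) :
      fderiv 𝕜 (fun q ↦ fderiv 𝕜 f q d) p e = fderiv 𝕜 (fderiv 𝕜 f) p e d := by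
    simp [fderiv_clm_apply hdf (differentiableAt_const d)]
  have hvw := bilinear_fderiv_add_eq_zero_of_eventually_const B (hdiff v) hν hv w
  have hwv := bilinear_fderiv_add_eq_zero_of_eventually_const B (hdiff w) hν hw v
  rw [hsecond, hf.isSymmSndFDerivAt le_rfl w v, ← hsecond] at hvw
  exact add_right_cancel (hvw.trans hwv.symm)

end Derivative

/-- `dot3` as a continuous bilinear map, the form in which it can be differentiated. -/
def dot3Bilin : R3 →L[ℝ] R3 →L[ℝ] ℝ := (dotProductBilin ℝ ℝ).toContinuousBilinearMap

theorem dot3_eq_dotProduct (a b : R3) : dot3 a b = a ⬝ᵥ b := (Matrix.vec3_dotProduct a b).symm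

theorem dot3Bilin_apply (a b : R3) : dot3Bilin a b = dot3 a b := (dot3_eq_dotProduct a b).symm

theorem dot3_comm (a b : R3) : dot3 a b = dot3 b a := by
  simp only [dot3_eq_dotProduct, dotProduct_comm]

/-- The germ at `p` of a pure frontal `f` with unit normal `ν`, where `f_v = v·h` and `ν_v = v·ν₁`:
the frame `{f_u, h, ν}` need not be orthonormal on the singular set `v = 0`. -/
structure PureFrontalAt (f ν h ν₁ : ℝ × ℝ → R3) (p : ℝ × ℝ) : Prop where
  contDiffAt_f : ContDiffAt ℝ 2 f p
  differentiableAt_ν : DifferentiableAt ℝ ν p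
  unit_ν : ∀ᶠ q in nhds p, dot3 (ν q) (ν q) = 1
  orth_fu_ν : ∀ᶠ q in nhds p, dot3 (pu f q) (ν q) = 0
  orth_fv_ν : ∀ᶠ q in nhds p, dot3 (pv f q) (ν q) = 0
  fv_eq : pv f p = p.2 • h p
  νv_eq : pv ν p = p.2 • ν₁ p
  indep : LinearIndependent ℝ ![pu f p, h p, ν p]

theorem AdaptedPureFrontal.pureFrontalAt {f ν h ν₁ : ℝ × ℝ → R3} (H : AdaptedPureFrontal f ν h ν₁)
    (p : ℝ × ℝ) : PureFrontalAt f ν h ν₁ p where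
  contDiffAt_f := H.smooth_f.contDiffAt.of_le (WithTop.coe_le_coe.mpr le_top)
  differentiableAt_ν := H.smooth_ν.differentiable (by simp) p
  unit_ν := .of_forall H.unit_ν
  orth_fu_ν := .of_forall H.orth_fu_ν
  orth_fv_ν := .of_forall H.orth_fv_ν
  fv_eq := H.fv_eq p
  νv_eq := H.νv_eq p
  indep := H.indep p

namespace PureFrontalAt

variable {f ν h ν₁ : ℝ × ℝ → R3} {p : ℝ × ℝ}

theorem dot3_ν_pu_f (H : PureFrontalAt f ν h ν₁ p) : dot3 (ν p) (pu f p) = 0 :=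
  (dot3_comm _ _).trans H.orth_fu_ν.self_of_nhds

theorem dot3_ν_h (H : PureFrontalAt f ν h ν₁ p) (hv : p.2 ≠ 0) : dot3 (ν p) (h p) = 0 := by
  have horth : dot3 (ν p) (pv f p) = 0 := (dot3_comm _ _).trans H.orth_fv_ν.self_of_nhds
  simpa [H.fv_eq, hv, dot3_eq_dotProduct] using horth

theorem dot3_ν_fderiv_ν (H : PureFrontalAt f ν h ν₁ p) (w : ℝ × ℝ) :
    dot3 (ν p) (fderiv ℝ ν p w) = 0 := by
  have hderiv := bilinear_fderiv_add_eq_zero_of_eventually_const dot3Bilin H.differentiableAt_ν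
    H.differentiableAt_ν (by simpa only [dot3Bilin_apply] using H.unit_ν) w
  rw [dot3Bilin_apply, dot3Bilin_apply, dot3_comm (fderiv ℝ ν p w)] at hderiv
  exact add_self_eq_zero.mp hderiv

theorem dot3_ν_ν₁ (H : PureFrontalAt f ν h ν₁ p) (hv : p.2 ≠ 0) : dot3 (ν p) (ν₁ p) = 0 := by
  have horth : dot3 (ν p) (pv ν p) = 0 := H.dot3_ν_fderiv_ν _
  simpa [H.νv_eq, hv, dot3_eq_dotProduct] using horth

theorem dot3_pu_f_ν₁ (H : PureFrontalAt f ν h ν₁ p) (hv : p.2 ≠ 0) :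
    dot3 (pu f p) (ν₁ p) = dot3 (h p) (pu ν p) := by
  have hsymm : dot3Bilin (pu f p) (pv ν p) = dot3Bilin (pv f p) (pu ν p) :=
    bilinear_fderiv_fderiv_comm_of_orthogonal dot3Bilin
      (by simpa using H.contDiffAt_f) H.differentiableAt_ν
      (by simpa only [dot3Bilin_apply] using! H.orth_fu_ν)
      (by simpa only [dot3Bilin_apply] using! H.orth_fv_ν)
  rw [H.fv_eq, H.νv_eq] at hsymm
  simpa [hv, dot3Bilin_apply] using hsymm

theorem Ft_sq_lt (H : PureFrontalAt f ν h ν₁ p) : Ft f h p ^ 2 < Et f p * Gt h p := by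
  have hpair : LinearIndependent ℝ ![pu f p, h p] := by
    convert H.indep.comp ![0, 1] (by decide) using 1
    ext i; fin_cases i <;> rfl
  simpa only [Ft, Et, Gt, dot3_eq_dotProduct] using dotProduct_sq_lt_of_linearIndependent hpair

theorem Kg_le_Hm_sq (H : PureFrontalAt f ν h ν₁ p) : Kg f ν h ν₁ p ≤ Hm f ν h ν₁ p ^ 2 := by
  have hD : 0 < Et f p * Gt h p - Ft f h p ^ 2 := sub_pos.mpr H.Ft_sq_lt
  have hdisc := four_mul_det_mul_det_le_sq (L := Lt f ν p) (M := Mt h ν p) (N := Nt1 h ν₁ p)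
    H.Ft_sq_lt
  rw [Kg, Hm, div_pow, div_le_div_iff₀ hD (by positivity)]
  linarith [mul_le_mul_of_nonneg_right hdisc hD.le]

theorem kap_quadratic (H : PureFrontalAt f ν h ν₁ p) {ε : ℝ} (hε : ε = 1 ∨ ε = -1) :
    kap f ν h ν₁ ε p ^ 2 - 2 * Hm f ν h ν₁ p * kap f ν h ν₁ ε p + Kg f ν h ν₁ p = 0 := by
  have hsqrt := Real.sq_sqrt (sub_nonneg.mpr H.Kg_le_Hm_sq)
  have hε_sq : ε ^ 2 = 1 := sq_eq_one_iff.mpr hε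
  unfold kap
  linear_combination hsqrt + √(Hm f ν h ν₁ p ^ 2 - Kg f ν h ν₁ p) ^ 2 * hε_sq

theorem det_pencil_kap (H : PureFrontalAt f ν h ν₁ p) {ε : ℝ} (hε : ε = 1 ∨ ε = -1) :
    (Lt f ν p - kap f ν h ν₁ ε p * Et f p) * (Nt1 h ν₁ p - kap f ν h ν₁ ε p * Gt h p) =
      (Mt h ν p - kap f ν h ν₁ ε p * Ft f h p) ^ 2 := by
  have hD : Et f p * Gt h p - Ft f h p ^ 2 ≠ 0 := (sub_pos.mpr H.Ft_sq_lt).ne'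
  have hK : Kg f ν h ν₁ p * (Et f p * Gt h p - Ft f h p ^ 2) =
      Lt f ν p * Nt1 h ν₁ p - Mt h ν p ^ 2 := div_mul_cancel₀ _ hD
  have hH : Hm f ν h ν₁ p * (2 * (Et f p * Gt h p - Ft f h p ^ 2)) =
      Et f p * Nt1 h ν₁ p - 2 * Ft f h p * Mt h ν p + Gt h p * Lt f ν p :=
    div_mul_cancel₀ _ (mul_ne_zero two_ne_zero hD)
  linear_combination
    (Et f p * Gt h p - Ft f h p ^ 2) * H.kap_quadratic hε - hK + kap f ν h ν₁ ε p * hH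

theorem rodrigues_of_snd_ne_zero (H : PureFrontalAt f ν h ν₁ p) (hv : p.2 ≠ 0) {ε : ℝ}
    (hε : ε = 1 ∨ ε = -1) :
    (Mt h ν p - kap f ν h ν₁ ε p * Ft f h p) • (pu ν p + kap f ν h ν₁ ε p • pu f p) =
      (Lt f ν p - kap f ν h ν₁ ε p * Et f p) • (ν₁ p + kap f ν h ν₁ ε p • h p) := by
  set κ := kap f ν h ν₁ ε p
  have hL : pu f p ⬝ᵥ (pu ν p + κ • pu f p) = -(Lt f ν p - κ * Et f p) := by
    simp only [Lt, Et, dot3_eq_dotProduct, dotProduct_add, dotProduct_smul, smul_eq_mul]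
    ring
  have hM : h p ⬝ᵥ (pu ν p + κ • pu f p) = -(Mt h ν p - κ * Ft f h p) := by
    simp only [Mt, Ft, dot3_eq_dotProduct, dotProduct_add, dotProduct_smul, smul_eq_mul,
      dotProduct_comm (pu f p)]
    ring
  have hN : h p ⬝ᵥ (ν₁ p + κ • h p) = -(Nt1 h ν₁ p - κ * Gt h p) := by
    simp only [Nt1, Gt, dot3_eq_dotProduct, dotProduct_add, dotProduct_smul, smul_eq_mul]
    ring
  have hν_pu : ν p ⬝ᵥ (pu ν p + κ • pu f p) = 0 := by
    have hν_pu_ν : dot3 (ν p) (pu ν p) = 0 := H.dot3_ν_fderiv_ν _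
    simp [← dot3_eq_dotProduct, hν_pu_ν, H.dot3_ν_pu_f]
  have hν_h : ν p ⬝ᵥ (ν₁ p + κ • h p) = 0 := by
    simp [← dot3_eq_dotProduct, H.dot3_ν_ν₁ hv, H.dot3_ν_h hv]
  have hsymm : pu f p ⬝ᵥ (ν₁ p + κ • h p) = h p ⬝ᵥ (pu ν p + κ • pu f p) := by
    simp [← dot3_eq_dotProduct, H.dot3_pu_f_ν₁ hv, dot3_comm (h p) (pu f p)]
  have hsingular := dotProduct_smul_eq_dotProduct_smul_of_singular H.indep hν_pu hν_h hsymm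
    (by rw [hL, hM, hN, neg_mul_neg, neg_sq, H.det_pencil_kap hε])
  rwa [hL, hM, neg_smul, neg_smul, neg_inj] at hsingular

end PureFrontalAt

theorem stmt_1_general {f ν h ν₁ : ℝ × ℝ → R3} {p : ℝ × ℝ} (H : PureFrontalAt f ν h ν₁ p) {ε : ℝ}
    (hε : ε = 1 ∨ ε = -1) :
    V1c f ν h ν₁ ε p • pu ν p + V2c f ν h ν₁ ε p • pv ν p =
      (-(kap f ν h ν₁ ε p)) • (V1c f ν h ν₁ ε p • pu f p + V2c f ν h ν₁ ε p • pv f p) := by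
  rw [H.fv_eq, H.νv_eq]
  by_cases hv : p.2 = 0
  · simp [V1c, hv]
  · have hrodrigues := H.rodrigues_of_snd_ne_zero hv hε
    unfold V1c V2c
    linear_combination (norm := module) (-p.2) • hrodrigues

/-- dν(V_j) = −κ_j·df(V_j) for the principal vector fields V_j (j = 1,2,
encoded by ε = ±1). -/
theorem stmt_1 (f ν h ν₁ : ℝ × ℝ → R3) (H : AdaptedPureFrontal f ν h ν₁)
    (hHK : ∀ p : ℝ × ℝ, Hm f ν h ν₁ p ^ 2 - Kg f ν h ν₁ p ≥ 0) :
    ∀ ε : ℝ, (ε = 1 ∨ ε = -1) → ∀ p : ℝ × ℝ,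
      V1c f ν h ν₁ ε p • pu ν p + V2c f ν h ν₁ ε p • pv ν p =
        (-(kap f ν h ν₁ ε p)) •
          (V1c f ν h ν₁ ε p • pu f p + V2c f ν h ν₁ ε p • pv f p) :=
  fun _ hε p ↦ stmt_1_general (H.pureFrontalAt p) hε
end
end

section
/- Under the adapted pure-frontal setup, assume H²−K > 0 on a neighborhood of 0 (so κ₁, κ₂ are C^∞ and κ₁ ≠ κ₂) and κ_t(0) ≠ 0. Then for each j ∈ {1,2}: the origin 0 is both a V_j-ridge point and a V_{j+1}-sub-parabolic point (i.e. the directional derivatives satisfy (V_jκ_j)(0) = 0 and (V_{j+1}κ_j)(0) = 0, indices mod 2) if and only if r_c(0) = 0. -/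
open Filter

noncomputable section

/-!
On the singular curve `v = 0` the `u`-component of every principal vector field vanishes, so there
`V_δ κ_ε = (L̃ - κ_δ) ∂_v κ_ε`, and `(L̃ - κ₁)(L̃ - κ₂) = -κ_t²` shows that the first factor is
nonzero. Since `f_uv = ν_uv = 0` on the curve, `Ẽ_v = L̃_v = 0` there, while expanding `h_v` and
`ν_u` in the orthonormal frame `(f_u, h, ν)` gives `M̃_v = L̃ F̃_v + M̃ G̃_v / 2`.
Substituting these in the quotients defining `H` and `K` yields `H_v = r_c / 48` and
`K_v = κ_ν r_c / 24`, whence `∂_v κ_ε = ε (κ_ε - κ_ν) r_c / (48 √(H² - K))`.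
-/

section Dot3

theorem dot3_zero_left (a : R3) : dot3 0 a = 0 := by
  simp only [dot3_eq_dotProduct, zero_dotProduct]

theorem dot3_zero_right (a : R3) : dot3 a 0 = 0 := by
  simp only [dot3_eq_dotProduct, dotProduct_zero]

theorem dot3_smul_left (c : ℝ) (a b : R3) : dot3 (c • a) b = c * dot3 a b := by
  simp only [dot3_eq_dotProduct, smul_dotProduct, smul_eq_mul]

theorem dot3_eq_sum_of_orthonormal {e : Fin 3 → R3}
    (he : ∀ i j, dot3 (e i) (e j) = if i = j then 1 else 0) (x y : R3) :
    dot3 x y = ∑ i, dot3 x (e i) * dot3 (e i) y := by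
  simp only [dot3_eq_dotProduct] at he ⊢
  have rows_orthonormal : Matrix.of e * (Matrix.of e).transpose = 1 := by
    ext i j
    exact he i j
  have columns_orthonormal := mul_eq_one_comm.mp rows_orthonormal
  calc x ⬝ᵥ y
      = x ⬝ᵥ ((Matrix.of e).transpose * Matrix.of e).mulVec y := by
        rw [columns_orthonormal, Matrix.one_mulVec]
    _ = (Matrix.of e).mulVec x ⬝ᵥ (Matrix.of e).mulVec y := by
        rw [← Matrix.mulVec_mulVec, Matrix.dotProduct_mulVec, Matrix.vecMul_transpose]
    _ = ∑ i, (x ⬝ᵥ e i) * (e i ⬝ᵥ y) :=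
        Finset.sum_congr rfl fun i _ => congrArg (· * (e i ⬝ᵥ y)) (dotProduct_comm (e i) x)

theorem hasDerivAt_dot3 {a b : ℝ → R3} {a' b' : R3} {t : ℝ} (ha : HasDerivAt a a' t)
    (hb : HasDerivAt b b' t) :
    HasDerivAt (fun s => dot3 (a s) (b s)) (dot3 a' (b t) + dot3 (a t) b') t := by
  rw [hasDerivAt_pi] at ha hb
  refine ((((ha 0).fun_mul (hb 0)).fun_add ((ha 1).fun_mul (hb 1))).fun_add
    ((ha 2).fun_mul (hb 2))).congr_deriv ?_
  simp only [dot3]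
  ring

theorem differentiableAt_dot3 {E : Type*} [NormedAddCommGroup E] [NormedSpace ℝ E] {a b : E → R3}
    {p : E} (ha : DifferentiableAt ℝ a p) (hb : DifferentiableAt ℝ b p) :
    DifferentiableAt ℝ (fun q => dot3 (a q) (b q)) p := by
  unfold dot3
  fun_prop

end Dot3

section PartialDerivatives

variable {E : Type*} [NormedAddCommGroup E] [NormedSpace ℝ E] {g k : ℝ × ℝ → E} {p : ℝ × ℝ}

theorem hasDerivAt_pv {u v : ℝ} (hg : DifferentiableAt ℝ g (u, v)) :
    HasDerivAt (fun t => g (u, t)) (pv g (u, v)) v :=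
  hg.hasFDerivAt.comp_hasDerivAt v ((hasDerivAt_const v u).prodMk (hasDerivAt_id v))

theorem pv_dot3 {a b : ℝ × ℝ → R3} (ha : DifferentiableAt ℝ a p) (hb : DifferentiableAt ℝ b p) :
    pv (fun q => dot3 (a q) (b q)) p = dot3 (pv a p) (b p) + dot3 (a p) (pv b p) :=
  (hasDerivAt_pv (differentiableAt_dot3 ha hb)).unique
    (hasDerivAt_dot3 (hasDerivAt_pv ha) (hasDerivAt_pv hb))

theorem pv_neg : pv (fun q => -g q) p = -pv g p := by
  rw [pv, fderiv_fun_neg, neg_apply, pv]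

theorem differentiable_pu (hg : ContDiff ℝ 2 g) : Differentiable ℝ (pu g) :=
  ((hg.fderiv_right (m := 1) (by norm_num)).clm_apply contDiff_const).differentiable one_ne_zero

theorem pv_pu_eq_pu_pv (hg : ContDiffAt ℝ 2 g p) : pv (pu g) p = pu (pv g) p := by
  have hd : DifferentiableAt ℝ (fderiv ℝ g) p :=
    (hg.fderiv_right (m := 1) (by norm_num)).differentiableAt one_ne_zero
  have second_derivative (x y : ℝ × ℝ) :
      fderiv ℝ (fun q => fderiv ℝ g q x) p y = fderiv ℝ (fderiv ℝ g) p y x := by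
    simp [fderiv_clm_apply hd (differentiableAt_const x)]
  calc pv (pu g) p = fderiv ℝ (fderiv ℝ g) p (0, 1) (1, 0) := second_derivative _ _
    _ = fderiv ℝ (fderiv ℝ g) p (1, 0) (0, 1) := (hg.isSymmSndFDerivAt (by simp)).eq _ _
    _ = pu (pv g) p := (second_derivative _ _).symm

theorem pu_snd_smul (hk : DifferentiableAt ℝ k p) :
    pu (fun q => q.2 • k q) p = p.2 • pu k p := by
  simp [pu, fderiv_fun_smul differentiableAt_snd hk, fderiv_snd]

theorem pv_pu_eq_zero_of_pv_eq_snd_smul {u : ℝ} (hg : ContDiffAt ℝ 2 g (u, 0))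
    (hk : DifferentiableAt ℝ k (u, 0)) (hgk : ∀ q, pv g q = q.2 • k q) :
    pv (pu g) (u, 0) = 0 := by
  rw [pv_pu_eq_pu_pv hg, funext hgk, pu_snd_smul hk, zero_smul]

end PartialDerivatives

theorem VD_axis (f ν h ν₁ : ℝ × ℝ → R3) (δ : ℝ) {E : Type*} [NormedAddCommGroup E]
    [NormedSpace ℝ E] (g : ℝ × ℝ → E) (u : ℝ) :
    VD f ν h ν₁ δ g (u, 0) = V2c f ν h ν₁ δ (u, 0) • pv g (u, 0) := by
  simp [VD, V1c]

namespace AdaptedPureFrontal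

variable {f ν h ν₁ : ℝ × ℝ → R3} {δ ε : ℝ}

section Frame

theorem differentiable_h (H : AdaptedPureFrontal f ν h ν₁) : Differentiable ℝ h :=
  H.smooth_h.differentiable (by simp)

theorem differentiable_fu (H : AdaptedPureFrontal f ν h ν₁) : Differentiable ℝ (pu f) :=
  differentiable_pu (contDiff_infty.mp H.smooth_f 2)

theorem differentiable_νu (H : AdaptedPureFrontal f ν h ν₁) : Differentiable ℝ (pu ν) :=
  differentiable_pu (contDiff_infty.mp H.smooth_ν 2)

theorem differentiable_ν₁ (H : AdaptedPureFrontal f ν h ν₁) : Differentiable ℝ ν₁ :=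
  H.smooth_ν₁.differentiable (by simp)

theorem pv_fu_axis (H : AdaptedPureFrontal f ν h ν₁) (u : ℝ) : pv (pu f) (u, 0) = 0 :=
  pv_pu_eq_zero_of_pv_eq_snd_smul (contDiff_infty.mp H.smooth_f 2).contDiffAt
    (H.differentiable_h _) H.fv_eq

theorem pv_νu_axis (H : AdaptedPureFrontal f ν h ν₁) (u : ℝ) : pv (pu ν) (u, 0) = 0 :=
  pv_pu_eq_zero_of_pv_eq_snd_smul (contDiff_infty.mp H.smooth_ν 2).contDiffAt
    (H.differentiable_ν₁ _) H.νv_eq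

theorem dot3_h_ν (H : AdaptedPureFrontal f ν h ν₁) (p : ℝ × ℝ) : dot3 (h p) (ν p) = 0 := by
  obtain ⟨u, v⟩ := p
  rcases eq_or_ne v 0 with rfl | hv
  · exact H.adapted_h_ν u
  · have orth := H.orth_fv_ν (u, v)
    rw [H.fv_eq, dot3_smul_left] at orth
    exact (mul_eq_zero.mp orth).resolve_left hv

theorem dot3_hv_ν_axis (H : AdaptedPureFrontal f ν h ν₁) (u : ℝ) :
    dot3 (pv h (u, 0)) (ν (u, 0)) = 0 := by
  have ν_v_eq_zero : pv ν (u, 0) = 0 := by rw [H.νv_eq, zero_smul]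
  have leibniz := pv_dot3 (H.differentiable_h (u, 0)) (H.smooth_ν.differentiable (by simp) (u, 0))
  rw [ν_v_eq_zero, dot3_zero_right, add_zero, funext H.dot3_h_ν] at leibniz
  simpa [pv] using leibniz.symm

theorem orthonormal_frame_axis (H : AdaptedPureFrontal f ν h ν₁) (u : ℝ) (i j : Fin 3) :
    dot3 (![pu f (u, 0), h (u, 0), ν (u, 0)] i) (![pu f (u, 0), h (u, 0), ν (u, 0)] j) =
      if i = j then 1 else 0 := by
  fin_cases i <;> fin_cases j <;>
    simp [H.adapted_fu, H.adapted_h, H.unit_ν, H.adapted_fu_h, H.orth_fu_ν, H.dot3_h_ν,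
      dot3_comm (h _) (pu f _), dot3_comm (ν _)]

end Frame

section FundamentalForms

theorem differentiable_Et (H : AdaptedPureFrontal f ν h ν₁) :
    Differentiable ℝ (Et f) := fun p =>
  differentiableAt_dot3 (H.differentiable_fu p) (H.differentiable_fu p)

theorem differentiable_Ft (H : AdaptedPureFrontal f ν h ν₁) :
    Differentiable ℝ (Ft f h) := fun p =>
  differentiableAt_dot3 (H.differentiable_fu p) (H.differentiable_h p)

theorem differentiable_Gt (H : AdaptedPureFrontal f ν h ν₁) :
    Differentiable ℝ (Gt h) := fun p =>
  differentiableAt_dot3 (H.differentiable_h p) (H.differentiable_h p)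

theorem differentiable_Lt (H : AdaptedPureFrontal f ν h ν₁) :
    Differentiable ℝ (Lt f ν) := fun p =>
  (differentiableAt_dot3 (H.differentiable_fu p) (H.differentiable_νu p)).fun_neg

theorem differentiable_Mt (H : AdaptedPureFrontal f ν h ν₁) :
    Differentiable ℝ (Mt h ν) := fun p =>
  (differentiableAt_dot3 (H.differentiable_h p) (H.differentiable_νu p)).fun_neg

theorem differentiable_Nt1 (H : AdaptedPureFrontal f ν h ν₁) :
    Differentiable ℝ (Nt1 h ν₁) := fun p =>
  (differentiableAt_dot3 (H.differentiable_h p) (H.differentiable_ν₁ p)).fun_neg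

theorem Et_axis (H : AdaptedPureFrontal f ν h ν₁) (u : ℝ) : Et f (u, 0) = 1 :=
  H.adapted_fu u

theorem Ft_axis (H : AdaptedPureFrontal f ν h ν₁) (u : ℝ) : Ft f h (u, 0) = 0 :=
  H.adapted_fu_h u

theorem Gt_axis (H : AdaptedPureFrontal f ν h ν₁) (u : ℝ) : Gt h (u, 0) = 1 :=
  H.adapted_h u

theorem pv_Et_axis (H : AdaptedPureFrontal f ν h ν₁) (u : ℝ) : pv (Et f) (u, 0) = 0 := by
  unfold Et
  rw [pv_dot3 (H.differentiable_fu _) (H.differentiable_fu _), H.pv_fu_axis, dot3_zero_left,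
    dot3_zero_right, add_zero]

theorem pv_Ft_axis (H : AdaptedPureFrontal f ν h ν₁) (u : ℝ) :
    pv (Ft f h) (u, 0) = dot3 (pv h (u, 0)) (pu f (u, 0)) := by
  unfold Ft
  rw [pv_dot3 (H.differentiable_fu _) (H.differentiable_h _), H.pv_fu_axis, dot3_zero_left,
    zero_add, dot3_comm]

theorem pv_Gt (H : AdaptedPureFrontal f ν h ν₁) (p : ℝ × ℝ) :
    pv (Gt h) p = 2 * dot3 (pv h p) (h p) := by
  unfold Gt
  rw [pv_dot3 (H.differentiable_h _) (H.differentiable_h _), dot3_comm (h p), two_mul]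

theorem pv_Lt_axis (H : AdaptedPureFrontal f ν h ν₁) (u : ℝ) : pv (Lt f ν) (u, 0) = 0 := by
  unfold Lt
  rw [pv_neg, pv_dot3 (H.differentiable_fu _) (H.differentiable_νu _), H.pv_fu_axis,
    H.pv_νu_axis, dot3_zero_left, dot3_zero_right, add_zero, neg_zero]

theorem pv_Mt_axis (H : AdaptedPureFrontal f ν h ν₁) (u : ℝ) :
    pv (Mt h ν) (u, 0) =
      Lt f ν (u, 0) * pv (Ft f h) (u, 0) + Mt h ν (u, 0) * (pv (Gt h) (u, 0) / 2) := by
  have leibniz : pv (Mt h ν) (u, 0) = -dot3 (pv h (u, 0)) (pu ν (u, 0)) := by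
    unfold Mt
    rw [pv_neg, pv_dot3 (H.differentiable_h _) (H.differentiable_νu _), H.pv_νu_axis,
      dot3_zero_right, add_zero]
  rw [leibniz, dot3_eq_sum_of_orthonormal (H.orthonormal_frame_axis u), Fin.sum_univ_three,
    H.pv_Ft_axis, H.pv_Gt, Lt, Mt]
  simp only [Matrix.cons_val, H.dot3_hv_ν_axis]
  ring

end FundamentalForms

section Curvatures

theorem Hm_axis (H : AdaptedPureFrontal f ν h ν₁) (u : ℝ) :
    Hm f ν h ν₁ (u, 0) = (Nt1 h ν₁ (u, 0) + Lt f ν (u, 0)) / 2 := by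
  rw [Hm, H.Et_axis, H.Ft_axis, H.Gt_axis]
  ring

theorem Kg_axis (H : AdaptedPureFrontal f ν h ν₁) (u : ℝ) :
    Kg f ν h ν₁ (u, 0) = Lt f ν (u, 0) * Nt1 h ν₁ (u, 0) - Mt h ν (u, 0) ^ 2 := by
  rw [Kg, H.Et_axis, H.Ft_axis, H.Gt_axis]
  ring

theorem Hm_sq_sub_Kg_axis_pos (H : AdaptedPureFrontal f ν h ν₁) {u : ℝ} (hkt : kt h ν u ≠ 0) :
    0 < Hm f ν h ν₁ (u, 0) ^ 2 - Kg f ν h ν₁ (u, 0) := by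
  calc 0 < ((Nt1 h ν₁ (u, 0) - Lt f ν (u, 0)) / 2) ^ 2 + kt h ν u ^ 2 := by positivity
    _ = Hm f ν h ν₁ (u, 0) ^ 2 - Kg f ν h ν₁ (u, 0) := by
      rw [H.Hm_axis, H.Kg_axis, kt]
      ring

theorem metric_det_axis (H : AdaptedPureFrontal f ν h ν₁) (u : ℝ) :
    Et f (u, 0) * Gt h (u, 0) - Ft f h (u, 0) ^ 2 = 1 := by
  rw [H.Et_axis, H.Ft_axis, H.Gt_axis]
  norm_num

theorem differentiableAt_Hm_axis (H : AdaptedPureFrontal f ν h ν₁) (u : ℝ) :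
    DifferentiableAt ℝ (Hm f ν h ν₁) (u, 0) := by
  have := H.differentiable_Et
  have := H.differentiable_Ft
  have := H.differentiable_Gt
  have := H.differentiable_Lt
  have := H.differentiable_Mt
  have := H.differentiable_Nt1
  unfold Hm
  fun_prop (disch := simp [H.metric_det_axis])

theorem differentiableAt_Kg_axis (H : AdaptedPureFrontal f ν h ν₁) (u : ℝ) :
    DifferentiableAt ℝ (Kg f ν h ν₁) (u, 0) := by
  have := H.differentiable_Et
  have := H.differentiable_Ft
  have := H.differentiable_Gt
  have := H.differentiable_Lt
  have := H.differentiable_Mt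
  have := H.differentiable_Nt1
  unfold Kg
  fun_prop (disch := simp [H.metric_det_axis])

theorem hasDerivAt_metric_det_axis (H : AdaptedPureFrontal f ν h ν₁) (u : ℝ) :
    HasDerivAt (fun v => Et f (u, v) * Gt h (u, v) - Ft f h (u, v) ^ 2) (pv (Gt h) (u, 0)) 0 := by
  have hE := hasDerivAt_pv (H.differentiable_Et (u, 0))
  have hF := hasDerivAt_pv (H.differentiable_Ft (u, 0))
  have hG := hasDerivAt_pv (H.differentiable_Gt (u, 0))
  refine ((hE.fun_mul hG).fun_sub (hF.fun_pow 2)).congr_deriv ?_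
  rw [H.pv_Et_axis, H.Et_axis, H.Ft_axis]
  ring

theorem pv_Hm_axis (H : AdaptedPureFrontal f ν h ν₁) (u : ℝ) :
    pv (Hm f ν h ν₁) (u, 0) = rc f ν h ν₁ u / 48 := by
  have hE := hasDerivAt_pv (H.differentiable_Et (u, 0))
  have hF := hasDerivAt_pv (H.differentiable_Ft (u, 0))
  have hG := hasDerivAt_pv (H.differentiable_Gt (u, 0))
  have hL := hasDerivAt_pv (H.differentiable_Lt (u, 0))
  have hM := hasDerivAt_pv (H.differentiable_Mt (u, 0))
  have hN := hasDerivAt_pv (H.differentiable_Nt1 (u, 0))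
  have quotient_rule :=
    (((hE.fun_mul hN).fun_sub ((hF.const_mul 2).fun_mul hM)).fun_add (hG.fun_mul hL)).fun_div
      ((H.hasDerivAt_metric_det_axis u).const_mul 2) (by simp [H.metric_det_axis])
  rw [(hasDerivAt_pv (H.differentiableAt_Hm_axis u)).unique quotient_rule, H.metric_det_axis,
    H.pv_Et_axis, H.pv_Lt_axis, H.Et_axis, H.Ft_axis, H.Gt_axis, rc]
  ring

theorem pv_Kg_axis (H : AdaptedPureFrontal f ν h ν₁) (u : ℝ) :
    pv (Kg f ν h ν₁) (u, 0) = kν f ν u * rc f ν h ν₁ u / 24 := by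
  have hL := hasDerivAt_pv (H.differentiable_Lt (u, 0))
  have hM := hasDerivAt_pv (H.differentiable_Mt (u, 0))
  have hN := hasDerivAt_pv (H.differentiable_Nt1 (u, 0))
  have quotient_rule := ((hL.fun_mul hN).fun_sub (hM.fun_pow 2)).fun_div
    (H.hasDerivAt_metric_det_axis u) (by simp [H.metric_det_axis])
  rw [(hasDerivAt_pv (H.differentiableAt_Kg_axis u)).unique quotient_rule, H.metric_det_axis,
    H.pv_Lt_axis, H.pv_Mt_axis, rc, kν]
  ring

end Curvatures

section PrincipalCurvatures

theorem V2c_axis (H : AdaptedPureFrontal f ν h ν₁) (δ u : ℝ) :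
    V2c f ν h ν₁ δ (u, 0) = kν f ν u - kap f ν h ν₁ δ (u, 0) := by
  rw [V2c, H.Et_axis, mul_one, kν]

theorem V2c_mul_V2c_neg_axis (H : AdaptedPureFrontal f ν h ν₁) {u : ℝ} (hkt : kt h ν u ≠ 0)
    (hδ : δ ^ 2 = 1) :
    V2c f ν h ν₁ δ (u, 0) * V2c f ν h ν₁ (-δ) (u, 0) = -kt h ν u ^ 2 := by
  have sq_sqrt := Real.sq_sqrt (H.Hm_sq_sub_Kg_axis_pos hkt).le
  have char_poly : kν f ν u ^ 2 - 2 * Hm f ν h ν₁ (u, 0) * kν f ν u + Kg f ν h ν₁ (u, 0) =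
      -kt h ν u ^ 2 := by
    rw [H.Hm_axis, H.Kg_axis, kν, kt]
    ring
  rw [H.V2c_axis, H.V2c_axis, kap, kap, ← char_poly]
  linear_combination -δ ^ 2 * sq_sqrt - (Hm f ν h ν₁ (u, 0) ^ 2 - Kg f ν h ν₁ (u, 0)) * hδ

theorem V2c_axis_ne_zero (H : AdaptedPureFrontal f ν h ν₁) {u : ℝ} (hkt : kt h ν u ≠ 0)
    (hδ : δ ^ 2 = 1) : V2c f ν h ν₁ δ (u, 0) ≠ 0 := by
  refine left_ne_zero_of_mul (b := V2c f ν h ν₁ (-δ) (u, 0)) ?_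
  rw [H.V2c_mul_V2c_neg_axis hkt hδ]
  exact neg_ne_zero.mpr (pow_ne_zero 2 hkt)

theorem pv_kap_axis (H : AdaptedPureFrontal f ν h ν₁) {u : ℝ} (hkt : kt h ν u ≠ 0)
    (hε : ε ^ 2 = 1) :
    pv (kap f ν h ν₁ ε) (u, 0) =
      -(ε * V2c f ν h ν₁ ε (u, 0)) /
        (48 * √(Hm f ν h ν₁ (u, 0) ^ 2 - Kg f ν h ν₁ (u, 0))) * rc f ν h ν₁ u := by
  have disc_pos := H.Hm_sq_sub_Kg_axis_pos hkt
  have dH := H.differentiableAt_Hm_axis u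
  have dK := H.differentiableAt_Kg_axis u
  have chain_rule := (hasDerivAt_pv dH).fun_add
    (((((hasDerivAt_pv dH).fun_pow 2).fun_sub (hasDerivAt_pv dK)).sqrt disc_pos.ne').const_mul ε)
  have dkap : DifferentiableAt ℝ (kap f ν h ν₁ ε) (u, 0) :=
    dH.fun_add ((((dH.fun_pow 2).fun_sub dK).sqrt disc_pos.ne').const_mul ε)
  rw [(hasDerivAt_pv dkap).unique chain_rule, H.pv_Hm_axis, H.pv_Kg_axis, H.V2c_axis, kap]
  field_simp
  linear_combination
    -48 * rc f ν h ν₁ u * √(Hm f ν h ν₁ (u, 0) ^ 2 - Kg f ν h ν₁ (u, 0)) * hε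

end PrincipalCurvatures

end AdaptedPureFrontal

theorem stmt_2_general {f ν h ν₁ : ℝ × ℝ → R3} (H : AdaptedPureFrontal f ν h ν₁) {u : ℝ}
    (hkt : kt h ν u ≠ 0) {δ ε : ℝ} (hδ : δ ^ 2 = 1) (hε : ε ^ 2 = 1) :
    VD f ν h ν₁ δ (kap f ν h ν₁ ε) (u, 0) = 0 ↔ rc f ν h ν₁ u = 0 := by
  have hε0 : ε ≠ 0 := by
    rintro rfl
    norm_num at hε
  have sqrt_disc_ne_zero := (Real.sqrt_pos.mpr (H.Hm_sq_sub_Kg_axis_pos hkt)).ne'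
  rw [VD_axis, smul_eq_mul, H.pv_kap_axis hkt hε]
  simp [H.V2c_axis_ne_zero hkt hδ, H.V2c_axis_ne_zero hkt hε, hε0, sqrt_disc_ne_zero]

/-- assuming H²−K > 0 near 0 and κ_t(0) ≠ 0, the origin is both a
V_j-ridge point and a V_{j+1}-sub-parabolic point if and only if r_c(0) = 0. -/
theorem stmt_2 (f ν h ν₁ : ℝ × ℝ → R3) (H : AdaptedPureFrontal f ν h ν₁)
    (hHK : ∀ᶠ p in nhds (0 : ℝ × ℝ), Hm f ν h ν₁ p ^ 2 - Kg f ν h ν₁ p > 0)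
    (hkt : kt h ν 0 ≠ 0) :
    ∀ ε : ℝ, (ε = 1 ∨ ε = -1) →
      ((VD f ν h ν₁ ε (kap f ν h ν₁ ε) 0 = 0 ∧
          VD f ν h ν₁ (-ε) (kap f ν h ν₁ ε) 0 = 0) ↔
        rc f ν h ν₁ 0 = 0) := by
  intro ε hε
  have hε_sq : ε ^ 2 = 1 := sq_eq_one_iff.mpr hε
  exact (and_congr (stmt_2_general H hkt hε_sq hε_sq)
    (stmt_2_general H hkt ((neg_sq ε).trans hε_sq) hε_sq)).trans and_self_iff
end
end
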